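/- Let U and V be finite-dimensional vector spaces over a field K and S a linear subspace of L(U,V). Assume that dim S⊥y > 1 for some y ∈ V, where S⊥y = {t(y) : t ∈ S⊥}. Then there exists a nonzero quadratic form q on V such that dim S⊥z ≥ 2 for every z ∈ V with q(z) ≠ 0. -/

import Mathlib

/-- The orthogonal `S⊥` of a subspace `S ⊆ L(U,V)` with respect to the trace bilinear
form `(s, t) ↦ tr (t ∘ s)`: the space of all `t : V →ₗ[K] U` with `tr (t ∘ s) = 0` for
every `s ∈ S`. -/
def tracePerp {K U V : Type*} [Field K] [AddCommGroup U] [Module K U]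
    [AddCommGroup V] [Module K V] (S : Submodule K (U →ₗ[K] V)) :
    Submodule K (V →ₗ[K] U) where
  carrier := {t | ∀ s ∈ S, LinearMap.trace K U (t ∘ₗ s) = 0}
  add_mem' := fun {a b} ha hb s hs => by
    simp only [LinearMap.add_comp, map_add, ha s hs, hb s hs, add_zero]
  zero_mem' := fun s hs => by simp
  smul_mem' := fun c t ht s hs => by
    simp only [LinearMap.smul_comp, map_smul, ht s hs, smul_zero]

/-!
Pick `t₀, t₁` in the given space of operators with `t₀ y, t₁ y` linearly independent, and linear
forms `f₀, f₁` dual to these two vectors. The determinant `q z` of the matrix `(fⱼ (tᵢ z))` is a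
quadratic form in `z` with `q y = 1`, and wherever it does not vanish `t₀ z, t₁ z` are linearly
independent.
-/

open Module

theorem linearIndependent_of_det_dual_ne_zero {ι R M : Type*} [Fintype ι] [DecidableEq ι]
    [CommRing R] [IsDomain R] [AddCommGroup M] [Module R M] (f : ι → Dual R M) (v : ι → M)
    (hdet : (Matrix.of fun i j => f j (v i)).det ≠ 0) : LinearIndependent R v :=
  .of_comp (LinearMap.pi f) (Matrix.linearIndependent_rows_of_det_ne_zero hdet)

theorem exists_dual_apply_eq_single_of_linearIndependent {ι K U : Type*}
    [DivisionRing K] [AddCommGroup U] [Module K U] {v : ι → U} (hv : LinearIndependent K v) :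
    ∃ f : ι → (U →ₗ[K] K), ∀ i j, f j (v i) = Finsupp.single i 1 j := by
  obtain ⟨g, hg⟩ := LinearMap.exists_leftInverse_of_injective _ (LinearMap.ker_eq_bot.2 hv)
  have hgv (i : ι) : g (v i) = Finsupp.single i 1 := by
    simpa using LinearMap.congr_fun hg (Finsupp.single i 1)
  exact ⟨fun j => Finsupp.lapply j ∘ₗ g, fun i j => by simp [hgv]⟩

theorem natCast_le_rank_map_iff {R M N : Type*} [Semiring R] [Nontrivial R] [AddCommMonoid M]
    [Module R M] [AddCommMonoid N] [Module R N] {φ : M →ₗ[R] N} {T : Submodule R M} {n : ℕ} :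
    n ≤ Module.rank R (T.map φ) ↔
      ∃ t : Fin n → M, (∀ i, t i ∈ T) ∧ LinearIndependent R fun i => φ (t i) := by
  rw [Module.le_rank_iff]
  constructor
  · rintro ⟨w, hw⟩
    choose t htT htw using fun i => Submodule.mem_map.1 (w i).2
    refine ⟨t, htT, ?_⟩
    simpa only [htw] using!
      hw.map_injOn (T.map φ).subtype (T.map φ).subtype_injective.injOn
  · rintro ⟨t, htT, ht⟩
    exact ⟨fun i => ⟨φ (t i), Submodule.mem_map_of_mem (htT i)⟩, .of_comp (T.map φ).subtype ht⟩

section EvalMinor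

variable {R M N : Type*} [CommRing R] [AddCommGroup M] [Module R M] [AddCommGroup N] [Module R N]

/-- The determinant of the `2 × 2` matrix `(fⱼ (tᵢ z))`, as a quadratic form in the vector `z` at
which the operators `t₀, t₁` are evaluated; over a domain, `t₀ z, t₁ z` are
linearly independent wherever it is nonzero. -/
def evalMinor (f : Fin 2 → Dual R N) (t : Fin 2 → M →ₗ[R] N) : QuadraticForm R M :=
  QuadraticMap.linMulLin (f 0 ∘ₗ t 0) (f 1 ∘ₗ t 1) -
    QuadraticMap.linMulLin (f 1 ∘ₗ t 0) (f 0 ∘ₗ t 1)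

theorem evalMinor_apply (f : Fin 2 → Dual R N) (t : Fin 2 → M →ₗ[R] N) (z : M) :
    evalMinor f t z = (Matrix.of fun i j => f j (t i z)).det := by
  simp [evalMinor, Matrix.det_fin_two]

end EvalMinor

theorem exists_quadratic_form_detecting_large_perp_evaluations_general {K U V : Type*} [Field K]
    [AddCommGroup U] [Module K U] [AddCommGroup V] [Module K V] (T : Submodule K (V →ₗ[K] U))
    (h : ∃ y : V, 2 ≤ Module.rank K (T.map (LinearMap.applyₗ y))) :
    ∃ q : QuadraticForm K V, q ≠ 0 ∧ ∀ z : V, q z ≠ 0 →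
      2 ≤ Module.rank K (T.map (LinearMap.applyₗ z)) := by
  obtain ⟨y, hy⟩ := h
  obtain ⟨t, htT, hty⟩ := natCast_le_rank_map_iff (n := 2).1 hy
  obtain ⟨f, hf⟩ := exists_dual_apply_eq_single_of_linearIndependent hty
  simp only [LinearMap.applyₗ_apply_apply] at hf
  have hqy : evalMinor f t y = 1 := by simp [evalMinor_apply, Matrix.det_fin_two, hf]
  refine ⟨evalMinor f t, fun hq => ?_, fun z hz => ?_⟩
  · simp [hq] at hqy
  · rw [evalMinor_apply] at hz
    exact natCast_le_rank_map_iff (n := 2).2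
      ⟨t, htT, linearIndependent_of_det_dual_ne_zero f _ hz⟩

/-- Let `S` be a linear subspace of `L(U,V)` such that
`dim S⊥y > 1` for some `y ∈ V` (with `S⊥y = {t y : t ∈ S⊥}`). Then there exists a
nonzero quadratic form `q` on `V` with `dim S⊥z ≥ 2` for every `z ∈ V` with
`q z ≠ 0`. -/
theorem exists_quadratic_form_detecting_large_perp_evaluations
    (K U V : Type*) [Field K]
    [AddCommGroup U] [Module K U] [FiniteDimensional K U]
    [AddCommGroup V] [Module K V] [FiniteDimensional K V]
    (S : Submodule K (U →ₗ[K] V))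
    (h : ∃ y : V,
      1 < Module.finrank K (Submodule.map (LinearMap.applyₗ y) (tracePerp S))) :
    ∃ q : QuadraticForm K V, q ≠ 0 ∧ ∀ z : V, q z ≠ 0 →
      2 ≤ Module.finrank K (Submodule.map (LinearMap.applyₗ z) (tracePerp S)) := by
  have hgeneral := exists_quadratic_form_detecting_large_perp_evaluations_general (tracePerp S)
  simp only [← Module.finrank_eq_rank, Nat.ofNat_le_cast] at hgeneral
  exact hgeneral h
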